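/- arXiv:1906.05515 — 2 statements merged into one kernel-verified Lean document; each statement's English description precedes it below -/
import Mathlib

section
/- Let G be a group, θ : G → G a homomorphism, and S = EBR(G, θ)¹ the extended Bruck–Reilly extension of G with an identity adjoined. Then S is right coherent but not weakly right noetherian. -/
def IsRightCongruence {M : Type*} [Monoid M] (r : M → M → Prop) : Prop :=
  Equivalence r ∧ ∀ a b c : M, r a b → r (a * c) (b * c)

def RCongGenBy {M : Type*} [Monoid M] (H : Set (M × M)) (r : M → M → Prop) : Prop :=
  IsRightCongruence r ∧ (∀ p ∈ H, r p.1 p.2) ∧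
    ∀ r' : M → M → Prop, IsRightCongruence r' → (∀ p ∈ H, r' p.1 p.2) →
      ∀ x y : M, r x y → r' x y

def FGRightCongruence {M : Type*} [Monoid M] (r : M → M → Prop) : Prop :=
  ∃ H : Set (M × M), H.Finite ∧ RCongGenBy H r

def RightCoherent (M : Type*) [Monoid M] : Prop :=
  ∀ r : M → M → Prop, FGRightCongruence r → ∀ a b : M,
    (∃ C : Finset M,
      {x : M | (∃ s : M, r x (a * s)) ∧ (∃ t : M, r x (b * t))} =
        ⋃ c ∈ C, {x : M | ∃ s : M, r x (c * s)}) ∧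
    FGRightCongruence (fun u v : M => r (a * u) (a * v))

def IsRightIdeal {M : Type*} [Monoid M] (I : Set M) : Prop :=
  ∀ a ∈ I, ∀ s : M, a * s ∈ I

def FGRightIdeal {M : Type*} [Monoid M] (I : Set M) : Prop :=
  ∃ A : Finset M, I = ⋃ a ∈ A, {x : M | ∃ s : M, x = a * s}

def WeaklyRightNoetherian (M : Type*) [Monoid M] : Prop :=
  ∀ I : Set M, IsRightIdeal I → FGRightIdeal I

/-! Divisibility `a ∣ b` in a noncommutative monoid `M` means `b ∈ aM`, so it encodes principal
right ideals. In `S = EBR(G, θ)¹` we have `(a, g, b) ∣ (c, h, d)` iff `a ≤ c`: the principal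
right ideals form a chain `S ⊃ ⋯ ⊃ e₋₁S ⊃ e₀S ⊃ e₁S ⊃ ⋯` with `eₙ = (n, 1, n)` idempotent, and the
only right ideal that is not finitely generated is `S \ {1}`, the union of the `eₙS`.

For coherence, let `D = {x | xρ ∈ (aρ)S}`, and suppose that an idempotent `e ∈ D`, say `e ρ as`,
divides `a` and satisfies `e ∣ pt ↔ e ∣ wt` for all `t` and every generator `(p, w)` of `ρ`. Then
`x = ex ρ a(sx)` for `x ∈ eS`. The set `{t | e ∣ pt}` is a principal right ideal `qS`, and the pairs
`(s(pq), s(wq))`, one for each `(p, w)`, together with `(1, sa)` generate `ann(aρ)`. Such an `e` is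
an idempotent generator of `D` when `D` is principal. When `D = S \ {1}`, it suffices that `e ≠ 1`
divides `a` and every non-identity element occurring in the finitely many generators of `ρ`.
-/

section RightIdeal

variable {M : Type*} [Monoid M]

theorem IsRightIdeal.mem_of_dvd {I : Set M} (hI : IsRightIdeal I) {a b : M} (ha : a ∈ I)
    (hab : a ∣ b) : b ∈ I := by
  obtain ⟨s, rfl⟩ := hab
  exact hI a ha s

theorem fgRightIdeal_empty : FGRightIdeal (∅ : Set M) :=
  ⟨∅, by simp⟩

theorem fgRightIdeal_setOf_dvd (a : M) : FGRightIdeal {x | a ∣ x} :=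
  ⟨{a}, by simp only [Finset.mem_singleton, Set.iUnion_iUnion_eq_left]; rfl⟩

theorem exists_mem_forall_dvd_of_finite (htotal : ∀ a b : M, a ∣ b ∨ b ∣ a) {T : Set M}
    (hfin : T.Finite) (hne : T.Nonempty) : ∃ m ∈ T, ∀ x ∈ T, m ∣ x := by
  induction T, hfin using Set.Finite.induction_on with
  | empty => exact absurd hne Set.not_nonempty_empty
  | @insert a T _ _ ih =>
    rcases T.eq_empty_or_nonempty with rfl | hT
    · exact ⟨a, by simp⟩
    obtain ⟨m, hmT, hm⟩ := ih hT
    rcases htotal a m with ham | hma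
    · exact ⟨a, Set.mem_insert _ _,
        Set.forall_mem_insert.2 ⟨dvd_rfl, fun x hx => ham.trans (hm x hx)⟩⟩
    · exact ⟨m, Set.mem_insert_of_mem _ hmT, Set.forall_mem_insert.2 ⟨hma, hm⟩⟩

theorem FGRightIdeal.exists_eq_setOf_dvd (htotal : ∀ a b : M, a ∣ b ∨ b ∣ a) {I : Set M}
    (hI : FGRightIdeal I) (hne : I.Nonempty) : ∃ m, I = {x | m ∣ x} := by
  obtain ⟨A, rfl⟩ := hI
  have hA : (A : Set M).Nonempty := by
    obtain ⟨x, hx⟩ := hne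
    obtain ⟨a, ha, -⟩ := Set.mem_iUnion₂.1 hx
    exact ⟨a, ha⟩
  obtain ⟨m, hmA, hm⟩ := exists_mem_forall_dvd_of_finite htotal A.finite_toSet hA
  refine ⟨m, Set.Subset.antisymm (Set.iUnion₂_subset fun a ha x hx => ?_) fun x hx =>
    Set.mem_iUnion₂.2 ⟨m, hmA, hx⟩⟩
  exact (hm a ha).trans hx

end RightIdeal

section RightCongruence

variable {M : Type*} [Monoid M] {r : M → M → Prop}

theorem IsRightCongruence.ann (hr : IsRightCongruence r) (a : M) :
    IsRightCongruence fun u v => r (a * u) (a * v) :=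
  ⟨hr.1.comap (a * ·), fun u v c h => by simpa only [mul_assoc] using hr.2 _ _ c h⟩

/-- The right ideal of those `x` whose class lies in the cyclic subact `(aρ)M` of `M/ρ`. -/
def cyclicPreimage (r : M → M → Prop) (a : M) : Set M :=
  {x | ∃ s, r x (a * s)}

theorem IsRightCongruence.isRightIdeal_cyclicPreimage (hr : IsRightCongruence r) (a : M) :
    IsRightIdeal (cyclicPreimage r a) := by
  rintro x ⟨s, hs⟩ c
  exact ⟨s * c, by simpa only [mul_assoc] using hr.2 _ _ c hs⟩

theorem IsRightCongruence.self_mem_cyclicPreimage (hr : IsRightCongruence r) (a : M) :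
    a ∈ cyclicPreimage r a :=
  ⟨1, by simpa only [mul_one] using hr.1.refl a⟩

theorem IsRightCongruence.mem_cyclicPreimage_congr (hr : IsRightCongruence r) (a : M) {x y : M}
    (hxy : r x y) : x ∈ cyclicPreimage r a ↔ y ∈ cyclicPreimage r a :=
  ⟨fun ⟨s, hs⟩ => ⟨s, hr.1.trans (hr.1.symm hxy) hs⟩, fun ⟨s, hs⟩ => ⟨s, hr.1.trans hxy hs⟩⟩

theorem cyclicPreimage_subset_of_dvd (r : M → M → Prop) {a b : M} (hab : a ∣ b) :
    cyclicPreimage r b ⊆ cyclicPreimage r a := by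
  obtain ⟨t, rfl⟩ := hab
  rintro x ⟨s, hs⟩
  exact ⟨t * s, by rwa [← mul_assoc]⟩

theorem exists_cyclicPreimage_inter_eq (htotal : ∀ a b : M, a ∣ b ∨ b ∣ a)
    (r : M → M → Prop) (a b : M) :
    ∃ c, cyclicPreimage r a ∩ cyclicPreimage r b = cyclicPreimage r c := by
  rcases htotal a b with hab | hba
  · exact ⟨b, Set.inter_eq_right.2 (cyclicPreimage_subset_of_dvd r hab)⟩
  · exact ⟨a, Set.inter_eq_left.2 (cyclicPreimage_subset_of_dvd r hba)⟩

/-- Given `σ` on `M`, the relation identifying `x` and `y` when their right multiples lie in `eM`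
simultaneously and, as soon as they do, become `σ`-related after left multiplication by `s`. -/
def dvdTransport (σ : M → M → Prop) (e s : M) (x y : M) : Prop :=
  ∀ c, (e ∣ x * c ↔ e ∣ y * c) ∧ (e ∣ x * c → σ (s * (x * c)) (s * (y * c)))

theorem IsRightCongruence.dvdTransport {σ : M → M → Prop} (hσ : IsRightCongruence σ) (e s : M) :
    IsRightCongruence (dvdTransport σ e s) := by
  refine ⟨⟨fun x c => ⟨Iff.rfl, fun _ => hσ.1.refl _⟩, fun hxy c => ?_, fun hxy hyz c => ?_⟩,
    fun x y c hxy d => by simpa only [mul_assoc] using hxy (c * d)⟩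
  · exact ⟨(hxy c).1.symm, fun hc => hσ.1.symm ((hxy c).2 ((hxy c).1.2 hc))⟩
  · exact ⟨(hxy c).1.trans (hyz c).1,
      fun hc => hσ.1.trans ((hxy c).2 hc) ((hyz c).2 ((hxy c).1.1 hc))⟩

theorem IsRightCongruence.rel_mul_of_dvd (hr : IsRightCongruence r) {a e s x : M}
    (he : IsIdempotentElem e) (hes : r e (a * s)) (hx : e ∣ x) : r x (a * (s * x)) := by
  obtain ⟨t, rfl⟩ := hx
  simpa only [mul_assoc, ← mul_assoc e e, he.eq] using hr.2 _ _ (e * t) hes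

theorem RCongGenBy.fgRightCongruence_ann {H : Set (M × M)} (hH : H.Finite)
    (hr : RCongGenBy H r) {a e s : M} (he : IsIdempotentElem e) (hea : e ∣ a)
    (hes : r e (a * s)) (hstable : ∀ p ∈ H, ∀ t, e ∣ p.1 * t ↔ e ∣ p.2 * t)
    (hresidual : ∀ p, ∃ q, ∀ t, e ∣ p * t ↔ q ∣ t) :
    FGRightCongruence fun u v => r (a * u) (a * v) := by
  obtain ⟨hcong, hHr, hmin⟩ := hr
  choose q hq using hresidual
  have hdvd (p : M) : e ∣ p * q p := (hq p _).2 dvd_rfl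
  refine ⟨insert (1, s * a) ((fun p => (s * (p.1 * q p.1), s * (p.2 * q p.1))) '' H),
    (hH.image _).insert _, hcong.ann a, ?_, fun σ hσ hgen u v huv => ?_⟩
  · rintro _ (rfl | ⟨p, hp, rfl⟩)
    · simpa only [mul_one] using hcong.rel_mul_of_dvd he hes hea
    · have h₁ := hcong.rel_mul_of_dvd he hes (hdvd p.1)
      have h₂ := hcong.rel_mul_of_dvd he hes ((hstable p hp _).1 (hdvd p.1))
      exact hcong.1.trans (hcong.1.symm h₁) (hcong.1.trans (hcong.2 _ _ _ (hHr p hp)) h₂)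
  · have hHσ : ∀ p ∈ H, dvdTransport σ e s p.1 p.2 := by
      refine fun p hp c => ⟨hstable p hp c, fun hc => ?_⟩
      obtain ⟨t, rfl⟩ := (hq p.1 c).1 hc
      simpa only [mul_assoc] using hσ.2 _ _ t (hgen _ (Set.mem_insert_of_mem _ ⟨p, hp, rfl⟩))
    have hsection (w : M) : σ w (s * (a * w)) := by
      simpa only [one_mul, mul_assoc] using hσ.2 _ _ w (hgen _ (Set.mem_insert _ _))
    have hsasa : σ (s * (a * u)) (s * (a * v)) := by
      simpa only [mul_one] using
        (hmin _ (hσ.dvdTransport e s) hHσ _ _ huv 1).2 (by simpa using hea.mul_right u)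
    exact hσ.1.trans (hsection u) (hσ.1.trans hsasa (hσ.1.symm (hsection v)))

theorem IsRightCongruence.exists_stable_idempotent_of_fg (hr : IsRightCongruence r)
    (htotal : ∀ a b : M, a ∣ b ∨ b ∣ a)
    (hidem : ∀ a : M, ∃ e, IsIdempotentElem e ∧ e ∣ a ∧ a ∣ e) {a : M}
    (hfg : FGRightIdeal (cyclicPreimage r a)) :
    ∃ e ∈ cyclicPreimage r a, IsIdempotentElem e ∧ e ∣ a ∧
      ∀ x y, r x y → ∀ t, e ∣ x * t ↔ e ∣ y * t := by
  have ha := hr.self_mem_cyclicPreimage a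
  obtain ⟨b, hb⟩ := hfg.exists_eq_setOf_dvd htotal ⟨a, ha⟩
  obtain ⟨e, he, heb, hbe⟩ := hidem b
  have hmem (x : M) : x ∈ cyclicPreimage r a ↔ e ∣ x := by
    rw [hb]
    exact ⟨heb.trans, hbe.trans⟩
  refine ⟨e, (hmem e).2 dvd_rfl, he, (hmem a).1 ha, fun x y hxy t => ?_⟩
  rw [← hmem, ← hmem]
  exact hr.mem_cyclicPreimage_congr a (hr.2 _ _ t hxy)

theorem IsRightCongruence.exists_stable_idempotent_of_eq_compl_one (hr : IsRightCongruence r)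
    (htotal : ∀ a b : M, a ∣ b ∨ b ∣ a)
    (hidem : ∀ a : M, ∃ e, IsIdempotentElem e ∧ e ∣ a ∧ a ∣ e) {a : M}
    (hD : cyclicPreimage r a = {1}ᶜ) {H : Set (M × M)} (hH : H.Finite)
    (hHr : ∀ p ∈ H, r p.1 p.2) :
    ∃ e ∈ cyclicPreimage r a, IsIdempotentElem e ∧ e ∣ a ∧
      ∀ p ∈ H, ∀ t, e ∣ p.1 * t ↔ e ∣ p.2 * t := by
  let T : Set M := insert a (Prod.fst '' H ∪ Prod.snd '' H) ∩ cyclicPreimage r a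
  have hT : T.Finite := (((hH.image _).union (hH.image _)).insert a).inter_of_left _
  have haT : a ∈ T := ⟨Set.mem_insert _ _, hr.self_mem_cyclicPreimage a⟩
  obtain ⟨m, hmT, hm⟩ := exists_mem_forall_dvd_of_finite htotal hT ⟨a, haT⟩
  obtain ⟨e, he, hem, hme⟩ := hidem m
  refine ⟨e, (hr.isRightIdeal_cyclicPreimage a).mem_of_dvd hmT.2 hme, he, hem.trans (hm a haT),
    fun p hp t => ?_⟩
  have hiff := hr.mem_cyclicPreimage_congr a (hHr p hp)
  by_cases h₁ : p.1 ∈ cyclicPreimage r a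
  · have he₁ : e ∣ p.1 := hem.trans (hm _ ⟨Or.inr (Or.inl ⟨p, hp, rfl⟩), h₁⟩)
    have he₂ : e ∣ p.2 := hem.trans (hm _ ⟨Or.inr (Or.inr ⟨p, hp, rfl⟩), hiff.1 h₁⟩)
    exact iff_of_true (he₁.mul_right t) (he₂.mul_right t)
  · have h₂ := mt hiff.2 h₁
    rw [hD, Set.notMem_compl_iff, Set.mem_singleton_iff] at h₁ h₂
    rw [h₁, h₂]

theorem rightCoherent_of_forall_fgRightIdeal_or_eq_compl_one
    (htotal : ∀ a b : M, a ∣ b ∨ b ∣ a)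
    (hidem : ∀ a : M, ∃ e, IsIdempotentElem e ∧ e ∣ a ∧ a ∣ e)
    (hresidual : ∀ a p : M, ∃ q, ∀ t, a ∣ p * t ↔ q ∣ t)
    (hideal : ∀ I : Set M, IsRightIdeal I → FGRightIdeal I ∨ I = {1}ᶜ) :
    RightCoherent M := by
  rintro r ⟨H, hH, hr⟩ a b
  refine ⟨?_, ?_⟩
  · obtain ⟨c, hc⟩ := exists_cyclicPreimage_inter_eq htotal r a b
    exact ⟨{c}, hc.trans (by simp only [Finset.mem_singleton, Set.iUnion_iUnion_eq_left]; rfl)⟩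
  · obtain ⟨e, ⟨s, hes⟩, he, hea, hstable⟩ : ∃ e ∈ cyclicPreimage r a, IsIdempotentElem e ∧
        e ∣ a ∧ ∀ p ∈ H, ∀ t, e ∣ p.1 * t ↔ e ∣ p.2 * t := by
      rcases hideal _ (hr.1.isRightIdeal_cyclicPreimage a) with hfg | hcompl
      · obtain ⟨e, heD, he, hea, hstable⟩ :=
          hr.1.exists_stable_idempotent_of_fg htotal hidem hfg
        exact ⟨e, heD, he, hea, fun p hp => hstable _ _ (hr.2.1 p hp)⟩
      · exact hr.1.exists_stable_idempotent_of_eq_compl_one htotal hidem hcompl hH hr.2.1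
    exact hr.fgRightCongruence_ann hH he hea hes hstable (hresidual e)

end RightCongruence

/-- `f` identifies the extended Bruck–Reilly extension `EBR(G, θ)` with `S \ {1}`, so that `S` is a
copy of `EBR(G, θ)¹`. -/
structure IsExtendedBruckReilly {G : Type*} [Group G] {S : Type*} [Monoid S] (θ : G →* G)
    (f : ℤ × G × ℤ → S) : Prop where
  injective : Function.Injective f
  ne_one : ∀ p, f p ≠ 1
  eq_one_or_exists : ∀ s, s = 1 ∨ ∃ p, f p = s
  mul_eq : ∀ (a : ℤ) (g : G) (b c : ℤ) (h : G) (d : ℤ),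
    f (a, g, b) * f (c, h, d) =
      f (a - b + max b c,
        θ^[(max b c - b).toNat] g * θ^[(max b c - c).toNat] h,
        d - c + max b c)

namespace IsExtendedBruckReilly

variable {G : Type*} [Group G] {S : Type*} [Monoid S] {θ : G →* G} {f : ℤ × G × ℤ → S}

theorem not_dvd_one (hf : IsExtendedBruckReilly θ f) (p : ℤ × G × ℤ) : ¬ f p ∣ 1 := by
  rintro ⟨s, hs⟩
  rcases hf.eq_one_or_exists s with rfl | ⟨q, rfl⟩
  · exact hf.ne_one p (by rw [hs, mul_one])
  · exact hf.ne_one _ ((hf.mul_eq _ _ _ _ _ _).symm.trans hs.symm)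

theorem dvd_iff (hf : IsExtendedBruckReilly θ f) {a b c d : ℤ} {g h : G} :
    f (a, g, b) ∣ f (c, h, d) ↔ a ≤ c := by
  constructor
  · rintro ⟨s, hs⟩
    rcases hf.eq_one_or_exists s with rfl | ⟨⟨i, k, j⟩, rfl⟩
    · rw [mul_one] at hs
      exact (congrArg Prod.fst (hf.injective hs)).ge
    · rw [hf.mul_eq] at hs
      have hc : c = a - b + max b i := congrArg Prod.fst (hf.injective hs)
      omega
  · intro hac
    refine ⟨f (c - a + b, (θ^[(c - a).toNat] g)⁻¹ * h, d), ?_⟩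
    have hmax : max b (c - a + b) = c - a + b := max_eq_right (by omega)
    simp [hf.mul_eq, hmax]

theorem isIdempotentElem (hf : IsExtendedBruckReilly θ f) (n : ℤ) :
    IsIdempotentElem (f (n, 1, n)) := by
  simp [IsIdempotentElem, hf.mul_eq]

theorem dvd_total (hf : IsExtendedBruckReilly θ f) (x y : S) : x ∣ y ∨ y ∣ x := by
  rcases hf.eq_one_or_exists x with rfl | ⟨⟨a, g, b⟩, rfl⟩
  · exact Or.inl (one_dvd y)
  rcases hf.eq_one_or_exists y with rfl | ⟨⟨c, h, d⟩, rfl⟩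
  · exact Or.inr (one_dvd _)
  rw [hf.dvd_iff, hf.dvd_iff]
  exact le_total a c

theorem exists_isIdempotentElem_dvd_dvd (hf : IsExtendedBruckReilly θ f) (x : S) :
    ∃ e, IsIdempotentElem e ∧ e ∣ x ∧ x ∣ e := by
  rcases hf.eq_one_or_exists x with rfl | ⟨⟨a, g, b⟩, rfl⟩
  · exact ⟨1, IsIdempotentElem.one, dvd_rfl, dvd_rfl⟩
  · exact ⟨f (a, 1, a), hf.isIdempotentElem a, hf.dvd_iff.2 le_rfl, hf.dvd_iff.2 le_rfl⟩

theorem exists_dvd_mul_iff_dvd (hf : IsExtendedBruckReilly θ f) (x p : S) :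
    ∃ q, ∀ t, x ∣ p * t ↔ q ∣ t := by
  by_cases hxp : x ∣ p
  · exact ⟨1, fun t => iff_of_true (hxp.mul_right t) (one_dvd t)⟩
  rcases hf.eq_one_or_exists p with rfl | ⟨⟨i, k, j⟩, rfl⟩
  · exact ⟨x, fun t => by rw [one_mul]⟩
  rcases hf.eq_one_or_exists x with rfl | ⟨⟨n, g, m⟩, rfl⟩
  · exact absurd (one_dvd _) hxp
  refine ⟨f (n - i + j, 1, n - i + j), fun t => ?_⟩
  rcases hf.eq_one_or_exists t with rfl | ⟨⟨c, h, d⟩, rfl⟩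
  · rw [mul_one]
    exact iff_of_false hxp (hf.not_dvd_one _)
  · rw [hf.dvd_iff] at hxp
    rw [hf.mul_eq, hf.dvd_iff, hf.dvd_iff]
    omega

theorem isRightIdeal_compl_one (hf : IsExtendedBruckReilly θ f) :
    IsRightIdeal ({1}ᶜ : Set S) := by
  rintro x hx s (hxs : x * s = 1)
  rcases hf.eq_one_or_exists x with rfl | ⟨p, rfl⟩
  · exact hx rfl
  · exact hf.not_dvd_one p ⟨s, hxs.symm⟩

theorem not_fgRightIdeal_compl_one (hf : IsExtendedBruckReilly θ f) :
    ¬ FGRightIdeal ({1}ᶜ : Set S) := by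
  intro hfg
  obtain ⟨m, hm⟩ := hfg.exists_eq_setOf_dvd hf.dvd_total ⟨f (0, 1, 0), hf.ne_one _⟩
  have hdvd (p : ℤ × G × ℤ) : m ∣ f p := hm.subset (hf.ne_one p)
  rcases hf.eq_one_or_exists m with rfl | ⟨⟨a, g, b⟩, rfl⟩
  · exact hm.superset dvd_rfl rfl
  · have := hf.dvd_iff.1 (hdvd (a - 1, 1, 0))
    omega

theorem mem_iff_exists_dvd (hf : IsExtendedBruckReilly θ f) {I : Set S} (hI : IsRightIdeal I)
    (h1 : 1 ∉ I) {x : S} : x ∈ I ↔ ∃ n, f (n, 1, n) ∈ I ∧ f (n, 1, n) ∣ x := by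
  refine ⟨fun hx => ?_, fun ⟨n, hn, hnx⟩ => hI.mem_of_dvd hn hnx⟩
  rcases hf.eq_one_or_exists x with rfl | ⟨⟨c, h, d⟩, rfl⟩
  · exact absurd hx h1
  · exact ⟨c, hI.mem_of_dvd hx (hf.dvd_iff.2 le_rfl), hf.dvd_iff.2 le_rfl⟩

theorem fgRightIdeal_or_eq_compl_one (hf : IsExtendedBruckReilly θ f) {I : Set S}
    (hI : IsRightIdeal I) : FGRightIdeal I ∨ I = {1}ᶜ := by
  by_cases h1 : (1 : S) ∈ I
  · have hI1 : I = {x | 1 ∣ x} :=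
      Set.ext fun x => iff_of_true (hI.mem_of_dvd h1 (one_dvd x)) (one_dvd x)
    exact Or.inl (hI1 ▸ fgRightIdeal_setOf_dvd 1)
  let L : Set ℤ := {n | f (n, 1, n) ∈ I}
  have hmem {x : S} : x ∈ I ↔ ∃ n ∈ L, f (n, 1, n) ∣ x := hf.mem_iff_exists_dvd hI h1
  rcases L.eq_empty_or_nonempty with hL | hL
  · have hI0 : I = ∅ := Set.eq_empty_of_forall_notMem fun x hx =>
      have ⟨_, hn, _⟩ := hmem.1 hx
      hL.subset hn
    exact Or.inl (hI0 ▸ fgRightIdeal_empty)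
  by_cases hbdd : BddBelow L
  · obtain ⟨n, hn, hleast⟩ : ∃ n, IsLeast L n :=
      ⟨sInf L, Int.csInf_mem hL hbdd, fun _ hk => csInf_le hbdd hk⟩
    have hIn : I = {x | f (n, 1, n) ∣ x} := Set.ext fun x => hmem.trans
      ⟨fun ⟨_, hk, hkx⟩ => (hf.dvd_iff.2 (hleast hk)).trans hkx, fun hx => ⟨n, hn, hx⟩⟩
    exact Or.inl (hIn ▸ fgRightIdeal_setOf_dvd _)
  · refine Or.inr (Set.Subset.antisymm (fun x hx hx1 => h1 (hx1 ▸ hx)) fun x hx => ?_)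
    obtain ⟨⟨c, h, d⟩, rfl⟩ := (hf.eq_one_or_exists x).resolve_left hx
    obtain ⟨n, hn, hnc⟩ := not_bddBelow_iff.1 hbdd c
    exact hmem.2 ⟨n, hn, hf.dvd_iff.2 hnc.le⟩

theorem rightCoherent (hf : IsExtendedBruckReilly θ f) : RightCoherent S :=
  rightCoherent_of_forall_fgRightIdeal_or_eq_compl_one hf.dvd_total
    hf.exists_isIdempotentElem_dvd_dvd hf.exists_dvd_mul_iff_dvd
    fun _ => hf.fgRightIdeal_or_eq_compl_one

theorem not_weaklyRightNoetherian (hf : IsExtendedBruckReilly θ f) : ¬ WeaklyRightNoetherian S :=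
  fun h => hf.not_fgRightIdeal_compl_one (h _ hf.isRightIdeal_compl_one)

end IsExtendedBruckReilly

theorem stmt5 {G : Type*} [Group G] (θ : G →* G)
    {S : Type*} [Monoid S] (f : ℤ × G × ℤ → S)
    (hinj : Function.Injective f)
    (hne1 : ∀ p : ℤ × G × ℤ, f p ≠ 1)
    (hcover : ∀ s : S, s = 1 ∨ ∃ p : ℤ × G × ℤ, f p = s)
    (hmul : ∀ (a : ℤ) (g : G) (b : ℤ) (c : ℤ) (h : G) (d : ℤ),
      f (a, g, b) * f (c, h, d) =
        f (a - b + max b c,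
           (⇑θ)^[(max b c - b).toNat] g * (⇑θ)^[(max b c - c).toNat] h,
           d - c + max b c)) :
    RightCoherent S ∧ ¬ WeaklyRightNoetherian S := by
  have hf : IsExtendedBruckReilly θ f := ⟨hinj, hne1, hcover, hmul⟩
  exact ⟨hf.rightCoherent, hf.not_weaklyRightNoetherian⟩
end

section
/- Let M be a monoid and let M¹ denote the monoid obtained from M by adjoining a new identity element (whether or not M already has one). Then M is right coherent if and only if M¹ is right coherent. -/
/-!
The retraction `f : M¹ → M` is surjective and its kernel is generated, as a right congruence, by
the single pair `(1, 1_M)`. A right congruence on the image of such a homomorphism is finitely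
generated exactly when its pullback is, and principal subacts and annihilators pull back too, so
coherence passes from `M¹` to `M`. Conversely, `x * 1_M = f x` in `M¹`, so a finitely generated
right congruence on `M¹` restricts to a finitely generated one on the ideal `M`. For `a, b ∈ M`
the intersections and annihilators over `M¹` are read off from those of the restriction, while
the adjoined identity gives the whole of `M¹/ρ` and the annihilator `ρ`.
-/

open Function Set

section Comap

variable {M N F : Type*} [Monoid M] [Monoid N] [FunLike F N M] [MulHomClass F N M]

theorem IsRightCongruence.comap {r : M → M → Prop} (hr : IsRightCongruence r)
    (f : F) : IsRightCongruence (r on f) :=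
  ⟨hr.1.comap f, fun a b c hab => by
    simpa only [onFun, map_mul] using hr.2 (f a) (f b) (f c) hab⟩

theorem IsRightCongruence.comap_rightInverse {r : N → N → Prop}
    (hr : IsRightCongruence r) {f : F} (hker : ∀ x y, f x = f y → r x y) {g : M → N}
    (hg : RightInverse g f) : IsRightCongruence (r on g) := by
  have map_mul_rel : ∀ x c, r (g (x * c)) (g x * g c) := fun x c =>
    hker _ _ (by rw [map_mul, hg, hg, hg])
  exact ⟨hr.1.comap g, fun x y c hxy => hr.1.trans (map_mul_rel x c)
    (hr.1.trans (hr.2 _ _ _ hxy) (hr.1.symm (map_mul_rel y c)))⟩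

theorem FGRightCongruence.isRightCongruence {r : M → M → Prop} (hr : FGRightCongruence r) :
    IsRightCongruence r :=
  let ⟨_, _, h, _⟩ := hr
  h

theorem FGRightCongruence.comap {r : M → M → Prop}
    (hr : FGRightCongruence r) {f : F} (hf : Surjective f)
    (hker : FGRightCongruence (Eq on f)) : FGRightCongruence (r on f) := by
  obtain ⟨K, hKfin, -, hK, hKmin⟩ := hker
  obtain ⟨H, hHfin, hrc, hH, hHmin⟩ := hr
  obtain ⟨g, hg⟩ := hf.hasRightInverse
  refine ⟨K ∪ Prod.map g g '' H, hKfin.union (hHfin.image _), hrc.comap f, ?_, ?_⟩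
  · rintro q (hq | ⟨p, hp, rfl⟩)
    · have hfq : f q.1 = f q.2 := hK q hq
      simpa only [onFun, hfq] using hrc.1.refl (f q.2)
    · simpa only [onFun, Prod.map, hg p.1, hg p.2] using hH p hp
  · intro r' hr' hgen x y hxy
    have hker' : ∀ x y, f x = f y → r' x y := hKmin r' hr' fun p hp => hgen p (.inl hp)
    have hgxy : r' (g (f x)) (g (f y)) :=
      hHmin _ (hr'.comap_rightInverse hker' hg)
        (fun p hp => hgen _ (.inr (mem_image_of_mem _ hp))) _ _ hxy
    exact hr'.1.trans (hker' _ _ (hg _).symm) (hr'.1.trans hgxy (hker' _ _ (hg _)))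

theorem FGRightCongruence.of_comap {f : F} (hf : Surjective f)
    {r : M → M → Prop} (hr : FGRightCongruence (r on f)) : FGRightCongruence r := by
  obtain ⟨H, hHfin, hrc, hH, hHmin⟩ := hr
  obtain ⟨g, hg⟩ := hf.hasRightInverse
  have on_section : ((r on f) on g) = r := by
    funext x y
    simp only [onFun, hg x, hg y]
  have hrefl : ∀ x, r x x := hf.forall.2 hrc.1.refl
  refine ⟨Prod.map f f '' H, hHfin.image _, ?_, forall_mem_image.2 hH, fun r' hr' hgen => ?_⟩
  · have hker : ∀ x y, f x = f y → (r on f) x y := fun x y hxy => by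
      simpa only [onFun, hxy] using hrefl (f y)
    exact on_section ▸ hrc.comap_rightInverse hker hg
  · exact hf.forall₂.2 (hHmin _ (hr'.comap f) fun p hp => hgen _ (mem_image_of_mem _ hp))

-- Multiplying by `j 1` moves a generating pair `(x, y)` of `r` to `(j (f x), j (f y))`, so the
-- pairs `(f x, f y)` generate the restriction.
theorem FGRightCongruence.comap_section {r : N → N → Prop}
    (hr : FGRightCongruence r) {f : F} {j : M →ₙ* N} (hfj : LeftInverse f j)
    (hj : ∀ x, x * j 1 = j (f x)) : FGRightCongruence (r on j) := by
  obtain ⟨H, hHfin, hrc, hH, hHmin⟩ := hr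
  refine ⟨Prod.map f f '' H, hHfin.image _, hrc.comap j, forall_mem_image.2 fun p hp => ?_, ?_⟩
  · simpa only [onFun, Prod.map, hj] using hrc.2 _ _ (j 1) (hH p hp)
  · intro r' hr' hgen x y hxy
    have hfjxy : r' (f (j x)) (f (j y)) :=
      hHmin _ (hr'.comap f) (fun p hp => hgen _ (mem_image_of_mem _ hp)) _ _ hxy
    rwa [hfj, hfj] at hfjxy

/-- The principal subact `(aρ)M` of `M/ρ`, encoded as the union in `M` of the classes it
contains. -/
def principalSubact (r : M → M → Prop) (a : M) : Set M :=
  {x | ∃ s, r x (a * s)}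

theorem rightCoherent_iff : RightCoherent M ↔ ∀ r : M → M → Prop, FGRightCongruence r → ∀ a b : M,
    (∃ C : Finset M,
      principalSubact r a ∩ principalSubact r b = ⋃ c ∈ C, principalSubact r c) ∧
    FGRightCongruence (r on (a * ·)) :=
  Iff.rfl

theorem principalSubact_one {r : M → M → Prop} (hr : IsRightCongruence r) :
    principalSubact r 1 = univ :=
  eq_univ_of_forall fun x => ⟨x, by simpa only [one_mul] using hr.1.refl x⟩

theorem principalSubact_comap {f : F} (hf : Surjective f) (r : M → M → Prop) (a : N) :
    principalSubact (r on f) a = f ⁻¹' principalSubact r (f a) := by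
  ext x
  simp only [principalSubact, onFun, map_mul, mem_ofPred_eq, mem_preimage, hf.exists]

theorem RightCoherent.of_surjective (hN : RightCoherent N) {f : F}
    (hf : Surjective f) (hker : FGRightCongruence (Eq on f)) : RightCoherent M := by
  classical
  refine rightCoherent_iff.2 fun r hr => hf.forall₂.2 fun a b => ?_
  obtain ⟨⟨C, hC⟩, hann⟩ := rightCoherent_iff.1 hN _ (hr.comap hf hker) a b
  refine ⟨⟨C.image f, hf.preimage_injective ?_⟩, .of_comap hf ?_⟩
  · simpa only [principalSubact_comap hf, preimage_inter, Finset.set_biUnion_finset_image,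
      preimage_iUnion₂] using hC
  · convert hann using 1
    funext u v
    simp only [onFun, map_mul]

end Comap

section WithOne

variable {M : Type*} [Monoid M]

/-- The retraction of `M¹` onto `M` sending the adjoined identity to `1 : M`; it is used to
transfer right congruences between `M¹` and `M`. -/
def withOneRetraction (M : Type*) [Monoid M] : WithOne M →* M :=
  WithOne.lift (MulHom.id M)

theorem withOneRetraction_coe (m : M) : withOneRetraction M m = m :=
  rfl

theorem withOneRetraction_surjective : Surjective (withOneRetraction M) :=
  fun m => ⟨m, rfl⟩

theorem coe_mul_eq_coe_mul_withOneRetraction (m : M) (x : WithOne M) :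
    (m : WithOne M) * x = ((m * withOneRetraction M x : M) : WithOne M) := by
  cases x with
  | one => rw [map_one, mul_one, mul_one]
  | coe n => rw [withOneRetraction_coe, WithOne.coe_mul]

theorem mul_coe_one_eq_coe_withOneRetraction (x : WithOne M) :
    x * ((1 : M) : WithOne M) = (withOneRetraction M x : M) := by
  cases x with
  | one => rw [map_one, one_mul]
  | coe n => rw [withOneRetraction_coe, ← WithOne.coe_mul, mul_one]

theorem fgRightCongruence_ker_withOneRetraction :
    FGRightCongruence (Eq on withOneRetraction M) := by
  have hEq : IsRightCongruence (Eq : M → M → Prop) := ⟨eq_equivalence, fun _ _ c h => h ▸ rfl⟩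
  refine ⟨{(1, ((1 : M) : WithOne M))}, finite_singleton _, hEq.comap _, ?_, ?_⟩
  · rintro _ rfl
    exact map_one _
  · intro r hr hgen x y hxy
    have rel_retraction : ∀ z : WithOne M, r z (withOneRetraction M z : M) := fun z => by
      simpa only [one_mul, coe_mul_eq_coe_mul_withOneRetraction] using hr.2 _ _ z (hgen _ rfl)
    have hy := rel_retraction y
    rw [← (hxy : withOneRetraction M x = withOneRetraction M y)] at hy
    exact hr.1.trans (rel_retraction x) (hr.1.symm hy)

theorem FGRightCongruence.comap_coe_withOne {r : WithOne M → WithOne M → Prop}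
    (hr : FGRightCongruence r) : FGRightCongruence (r on ((↑) : M → WithOne M)) :=
  hr.comap_section (j := (WithOne.coeMulHom : M →ₙ* WithOne M)) withOneRetraction_coe
    mul_coe_one_eq_coe_withOneRetraction

theorem principalSubact_coe_withOne {r : WithOne M → WithOne M → Prop}
    (hr : IsRightCongruence r) (a : M) :
    principalSubact r (a : WithOne M) = {x | r x (withOneRetraction M x : M)} ∩
      withOneRetraction M ⁻¹' principalSubact (r on ((↑) : M → WithOne M)) a := by
  ext x
  constructor
  · rintro ⟨s, hs⟩
    rw [coe_mul_eq_coe_mul_withOneRetraction] at hs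
    have hxa : r (withOneRetraction M x : M) (a * withOneRetraction M s : M) := by
      simpa only [mul_coe_one_eq_coe_withOneRetraction, withOneRetraction_coe]
        using hr.2 _ _ ((1 : M) : WithOne M) hs
    exact ⟨hr.1.trans hs (hr.1.symm hxa), _, hxa⟩
  · rintro ⟨hx, s, hs⟩
    exact ⟨s, hr.1.trans hx hs⟩

theorem exists_principalSubact_coe_inter_eq {r : WithOne M → WithOne M → Prop}
    (hM : RightCoherent M) (hr : FGRightCongruence r) (a b : M) :
    ∃ C : Finset (WithOne M),
      principalSubact r (a : WithOne M) ∩ principalSubact r (b : WithOne M) =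
        ⋃ c ∈ C, principalSubact r c := by
  classical
  obtain ⟨C, hC⟩ := (rightCoherent_iff.1 hM _ hr.comap_coe_withOne a b).1
  exact ⟨C.image (↑), by simp only [principalSubact_coe_withOne hr.isRightCongruence,
    Finset.set_biUnion_finset_image, ← inter_inter_distrib_left, ← preimage_inter, hC,
    preimage_iUnion₂, inter_iUnion₂]⟩

theorem RightCoherent.withOne (hM : RightCoherent M) : RightCoherent (WithOne M) := by
  refine rightCoherent_iff.2 fun r hr a b => ⟨?_, ?_⟩
  · have hone := principalSubact_one hr.isRightCongruence
    cases a with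
    | one => exact ⟨{b}, by simp only [hone, univ_inter, Finset.set_biUnion_singleton]⟩
    | coe a =>
      cases b with
      | one => exact ⟨{↑a}, by simp only [hone, inter_univ, Finset.set_biUnion_singleton]⟩
      | coe b => exact exists_principalSubact_coe_inter_eq hM hr a b
  · cases a with
    | one => simpa only [one_mul] using hr
    | coe a =>
      have hann := (rightCoherent_iff.1 hM _ hr.comap_coe_withOne a a).2
      simp only [coe_mul_eq_coe_mul_withOneRetraction]
      exact hann.comap withOneRetraction_surjective fgRightCongruence_ker_withOneRetraction

end WithOne

theorem stmt7 {M : Type*} [Monoid M] :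
    RightCoherent M ↔ RightCoherent (WithOne M) :=
  ⟨RightCoherent.withOne, fun h =>
    h.of_surjective withOneRetraction_surjective fgRightCongruence_ker_withOneRetraction⟩
end
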